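/- Let m ≥ 2 and 0 < l ≤ m be integers and Δ > 1. There is a constant C, depending only on Δ and m, such that the following holds. Let J be a real 2m×m matrix whose blocks J^0, J^1 are invertible, whose rows satisfy J^0_h = J^1_h for 1 ≤ h ≤ l, and such that Π_j Π^T is Δ-regular for every j ∈ 𝒞, where Π := Π^J. Then for all j ∈ 𝒞 and all ξ ∈ ℝ^m one has |Π^T Θ̃ ξ| ≤ C |Θ̃ Π_j Π^T Θ̃ ξ| ≤ C |Θ Π^T Θ̃ ξ|. -/

import Mathlib

open MeasureTheory Matrix
open scoped ENNReal NNReal BigOperators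

noncomputable section

namespace SBL

/-- The set of corners of the `m`-dimensional cube: functions `{1,…,m} → {0,1}`. -/
abbrev Corner (m : ℕ) := Fin m → Fin 2

/-- Index type for `ℝ^{2m}`: coordinates `x^0_i` (left) and `x^1_i` (right). -/
abbrev Idx (m : ℕ) := Fin m ⊕ Fin m

/-- The coordinate of `ℝ^{2m}` selected by the corner `j` at position `i`. -/
def sel {m : ℕ} (j : Corner m) (i : Fin m) : Idx m :=
  if j i = 0 then Sum.inl i else Sum.inr i

/-- The projection `Π_j : ℝ^{2m} → ℝ^m`, `Π_j x = (x_1^{j(1)},…,x_m^{j(m)})`. -/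
def proj {m : ℕ} (j : Corner m) (x : Idx m → ℝ) : Fin m → ℝ := fun i => x (sel j i)

/-- The projection `Π_j` as an `m × 2m` matrix. -/
def projM {m : ℕ} (j : Corner m) : Matrix (Fin m) (Idx m) ℝ :=
  Matrix.of fun i k => if k = sel j i then 1 else 0

/-- `A_j := Π_j J`, the `m × m` matrix obtained by applying `Π_j` to (the columns of) a
`2m × m` matrix `J`, i.e. selecting rows of `J` according to the corner `j`. -/
def Amat {m : ℕ} (J : Matrix (Idx m) (Fin m) ℝ) (j : Corner m) : Matrix (Fin m) (Fin m) ℝ :=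
  Matrix.of fun i k => J (sel j i) k

/-- Euclidean norm on a finite pi type. -/
def en {ι : Type*} [Fintype ι] (x : ι → ℝ) : ℝ := Real.sqrt (∑ i, (x i) ^ 2)

/-- Operator norm of a matrix with respect to the Euclidean norms. -/
def opNorm {ι κ : Type*} [Fintype ι] [Fintype κ] [DecidableEq κ] (A : Matrix ι κ ℝ) : ℝ :=
  ‖LinearMap.toContinuousLinearMap (Matrix.toEuclideanLin A)‖

/-- `Δ`-regularity of a square matrix: `max(‖A‖, |det A|⁻¹) ≤ Δ` (in particular `det A ≠ 0`). -/
def IsReg {m : ℕ} (Δ : ℝ) (A : Matrix (Fin m) (Fin m) ℝ) : Prop :=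
  opNorm A ≤ Δ ∧ A.det ≠ 0 ∧ |A.det|⁻¹ ≤ Δ

/-- A Calderón–Zygmund kernel of order `n` in `ℝ^m`, given by its multiplier `K̂` on
`ℝ^m ∖ {0}`: it is `n` times continuously differentiable there and satisfies the symbol
estimates `‖D^k K̂(η)‖ ≤ |η|^{-k}` for all `k ≤ n`. -/
def IsCZ {m : ℕ} (n : ℕ) (Khat : (Fin m → ℝ) → ℂ) : Prop :=
  ContDiffOn ℝ n Khat {0}ᶜ ∧
  ∀ k : ℕ, k ≤ n → ∀ η : Fin m → ℝ, η ≠ 0 →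
    ‖iteratedFDerivWithin ℝ k Khat {0}ᶜ η‖ ≤ (en η) ^ (-(k : ℝ))

/-- Fourier transform of a (nice) function on `ℝ^{2m}`. -/
def fourierT {m : ℕ} (φ : (Idx m → ℝ) → ℝ) (ξ : Idx m → ℝ) : ℂ :=
  ∫ x : Idx m → ℝ, Complex.exp (-2 * Real.pi * Complex.I * (∑ k, x k * ξ k)) * (φ x : ℂ)

/-- The principal value `p.v. ∫_{ℝ^{2m}} (∏_j F_j(Π_j x)) K(Πx) dx`, defined as
`∫_{ℝ^m} φ̂(−Π^T η) K̂(η) dη` with `φ = ∏_j F_j ∘ Π_j`. -/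
def pv {m : ℕ} (P : Matrix (Fin m) (Idx m) ℝ) (Khat : (Fin m → ℝ) → ℂ)
    (F : Corner m → (Fin m → ℝ) → ℝ) : ℂ :=
  ∫ η : Fin m → ℝ, fourierT (fun x => ∏ j, F j (proj j x)) (-(P.transpose.mulVec η)) * Khat η

/-- Upper `m×m` block `J^0` of a `2m×m` matrix. -/
def Jb0 {m : ℕ} (J : Matrix (Idx m) (Fin m) ℝ) : Matrix (Fin m) (Fin m) ℝ :=
  J.submatrix Sum.inl id

/-- Lower `m×m` block `J^1` of a `2m×m` matrix. -/
def Jb1 {m : ℕ} (J : Matrix (Idx m) (Fin m) ℝ) : Matrix (Fin m) (Fin m) ℝ :=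
  J.submatrix Sum.inr id

/-- `Π^J := (I, −J^0 (J^1)⁻¹)`. -/
def PiJ {m : ℕ} (J : Matrix (Idx m) (Fin m) ℝ) : Matrix (Fin m) (Idx m) ℝ :=
  Matrix.fromCols 1 (-(Jb0 J * (Jb1 J)⁻¹))

/-- The dyadic cube with parameters `Q = (k, n)`: `∏_i [2^k n_i, 2^k (n_i+1))`. -/
def dC {m : ℕ} (Q : ℤ × (Fin m → ℤ)) : Set (Fin m → ℝ) :=
  {x | ∀ i, (2:ℝ)^Q.1 * (Q.2 i : ℝ) ≤ x i ∧ x i < (2:ℝ)^Q.1 * ((Q.2 i : ℝ) + 1)}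

/-- `Q*`: the cube with the same center as `Q` and three times the side length. -/
def dCstar {m : ℕ} (Q : ℤ × (Fin m → ℤ)) : Set (Fin m → ℝ) :=
  {x | ∀ i, (2:ℝ)^Q.1 * ((Q.2 i : ℝ) - 1) ≤ x i ∧ x i < (2:ℝ)^Q.1 * ((Q.2 i : ℝ) + 2)}

/-- A (1/2-)sparse collection of dyadic cubes. -/
def IsSparse {m : ℕ} (S : Set (ℤ × (Fin m → ℤ))) : Prop :=
  ∀ Q ∈ S,
    (∑' Q' : {q : ℤ × (Fin m → ℤ) // q ∈ S ∧ dC q ⊆ dC Q}, volume (dC Q'.val)) ≤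
      2 * volume (dC Q)

/-- The average `[F]_S := (|S|⁻¹ ∫_S |F|^{2^{m-1}})^{2^{1-m}}`. -/
def avg {m : ℕ} (S : Set (Fin m → ℝ)) (F : (Fin m → ℝ) → ℝ) : ℝ :=
  (((volume S).toReal)⁻¹ * ∫ x in S, |F x| ^ (2^(m-1) : ℕ)) ^ ((2:ℝ) ^ ((1:ℤ) - (m:ℤ)))

/-- The closed axis-parallel box `∏_i [a_i, b_i]`. -/
def box {m : ℕ} (a b : Fin m → ℝ) : Set (Fin m → ℝ) := {x | ∀ i, a i ≤ x i ∧ x i ≤ b i}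

/-- Reciprocal eccentricity `ε_R = (min_i |I_i|)/(max_i |I_i|)` of the box `∏_i [a_i,b_i]`. -/
def ecc {m : ℕ} (a b : Fin m → ℝ) : ℝ := (⨅ i, (b i - a i)) / (⨆ i, (b i - a i))

/-- Modified strong maximal function evaluated on a set `S`:
`sup { (ε_R^α)^{2^{1-m}} [F]_R : R ∈ ℛ, S ⊆ R }` (as an extended real). -/
def Mal {m : ℕ} (α : ℝ) (F : (Fin m → ℝ) → ℝ) (S : Set (Fin m → ℝ)) : ℝ≥0∞ :=
  ⨆ (a : Fin m → ℝ) (b : Fin m → ℝ) (_ : ∀ i, a i < b i) (_ : S ⊆ box a b),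
    ENNReal.ofReal ((ecc a b ^ α) ^ ((2:ℝ) ^ ((1:ℤ) - (m:ℤ))) * avg (box a b) F)

/-- `M_α(F)(A𝒯) := sup_{Q ∈ 𝒯} M_α(F)(AQ)`. -/
def MalTree {m : ℕ} (α : ℝ) (F : (Fin m → ℝ) → ℝ) (A : Matrix (Fin m) (Fin m) ℝ)
    (T : Set (ℤ × (Fin m → ℤ))) : ℝ≥0∞ :=
  ⨆ Q ∈ T, Mal α F (A.mulVec '' dC Q)

/-- A convex tree of dyadic cubes with top cube `Qt`. -/
def ConvexTree {m : ℕ} (T : Set (ℤ × (Fin m → ℤ))) (Qt : ℤ × (Fin m → ℤ)) : Prop :=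
  Qt ∈ T ∧ (∀ Q ∈ T, dC Q ⊆ dC Qt) ∧
  ∀ Q ∈ T, ∀ Q' : ℤ × (Fin m → ℤ), dC Q ⊆ dC Q' → dC Q' ⊆ dC Qt → Q' ∈ T

/-- The Gaussian `g(x) = e^{−π|x|²}` on `ℝ^{2m}`. -/
def gss {m : ℕ} (x : Idx m → ℝ) : ℝ := Real.exp (-Real.pi * ∑ k, (x k) ^ 2)

/-- The mixed partial derivative `∂^0_i ∂^1_i g`. -/
def ddg {m : ℕ} (i : Fin m) (x : Idx m → ℝ) : ℝ :=
  fderiv ℝ (fun y : Idx m → ℝ => fderiv ℝ gss y (Pi.single (Sum.inl i) (1:ℝ))) x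
    (Pi.single (Sum.inr i) (1:ℝ))

/-- Isotropic `L¹` dilation on `ℝ^{2m}`: `φ_t(x) = t^{-2m} φ(t⁻¹ x)`. -/
def dil {m : ℕ} (t : ℝ) (φ : (Idx m → ℝ) → ℝ) (x : Idx m → ℝ) : ℝ :=
  (t ^ (2*m))⁻¹ * φ (t⁻¹ • x)

/-- Matrix dilation: `φ_D(x) = (det D)⁻¹ φ(D⁻¹ x)`. -/
def dilM {m : ℕ} (D : Matrix (Idx m) (Idx m) ℝ) (φ : (Idx m → ℝ) → ℝ) (x : Idx m → ℝ) : ℝ :=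
  (D.det)⁻¹ * φ (D⁻¹.mulVec x)

/-- The region `Ω_𝒯 = ∪_{Q∈𝒯} Q × (ℓ(Q)/2, ℓ(Q))` in the upper half space. -/
def Omega {m : ℕ} (T : Set (ℤ × (Fin m → ℤ))) : Set ((Fin m → ℝ) × ℝ) :=
  ⋃ Q ∈ T, (dC Q) ×ˢ Set.Ioo ((2:ℝ)^Q.1 / 2) ((2:ℝ)^Q.1)

/-- The localized form `Λ_𝒯((F_j)_j)`. -/
def LambdaT {m : ℕ} (J : Matrix (Idx m) (Fin m) ℝ) (T : Set (ℤ × (Fin m → ℤ)))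
    (c : ℝ → ℂ) (u : Idx m → ℝ) (i : Fin m) (F : Corner m → (Fin m → ℝ) → ℝ) : ℂ :=
  ∫ z in Omega T, c z.2 * Complex.ofReal ((1 + en u ^ (4*m))⁻¹ * (z.2)⁻¹ *
    ∫ x : Idx m → ℝ, (∏ j, F j (proj j x)) * dil z.2 (ddg i) (x - J.mulVec z.1 + z.2 • u))

/-- `T_k := ∪ {Q ∈ 𝒯 : ℓ(Q) = 2^k}`. -/
def Tkset {m : ℕ} (T : Set (ℤ × (Fin m → ℤ))) (k : ℤ) : Set (Fin m → ℝ) :=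
  ⋃ Q ∈ {q ∈ T | q.1 = k}, dC Q

/-- The form `Λ̃_𝒯((F_j)_j)` with localization in the `x` variables. -/
def LambdaTilde {m : ℕ} (J : Matrix (Idx m) (Fin m) ℝ) (T : Set (ℤ × (Fin m → ℤ)))
    (c : ℝ → ℂ) (u : Idx m → ℝ) (i : Fin m) (F : Corner m → (Fin m → ℝ) → ℝ) : ℂ :=
  ∑' k : ℤ, ∫ t in Set.Ioc ((2:ℝ)^(k-1)) ((2:ℝ)^k),
    c t * Complex.ofReal ((1 + en u ^ (4*m))⁻¹ * t⁻¹ *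
      ∫ p : Fin m → ℝ, ∫ x : Idx m → ℝ,
        (∏ j, Set.indicator ((Amat J j).mulVec '' Tkset T k) (F j) (proj j x)) *
          dil t (ddg i) (x - J.mulVec p + t • u))

/-- The form `Λ(𝒯,J,K)((F_j)_j)` from the induction proposition. -/
def LambdaK {m : ℕ} (J : Matrix (Idx m) (Fin m) ℝ) (T : Set (ℤ × (Fin m → ℤ)))
    (K : ℝ → (Idx m → ℝ) → ℂ) (F : Corner m → (Fin m → ℝ) → ℝ) : ℂ :=
  ∑' k : ℤ, ∫ x : Idx m → ℝ,
    Complex.ofReal (∏ j, Set.indicator ((Amat J j).mulVec '' Tkset T k) (F j) (proj j x)) *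
      ∫ t in Set.Ioc ((2:ℝ)^(k-1)) ((2:ℝ)^k), K t x * (t : ℂ)⁻¹

/-- The reflected corner `i∗j`, differing from `j` exactly at position `i`. -/
def istar {m : ℕ} (i : Fin m) (j : Corner m) : Corner m :=
  fun k => if k = i then 1 - j i else j k

/-- The diagonal matrix `Θ̃` with entry 0 at positions `i ≤ l` and 1 at positions `i > l`
(1-based), i.e. 0 for `i < l` and 1 otherwise in 0-based indexing. -/
def Th {m : ℕ} (l : ℕ) : Matrix (Fin m) (Fin m) ℝ :=
  Matrix.diagonal fun i => if (i : ℕ) < l then 0 else 1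

/-- The block diagonal matrix `Θ = diag(Θ̃, Θ̃)`. -/
def ThB {m : ℕ} (l : ℕ) : Matrix (Idx m) (Idx m) ℝ :=
  Matrix.diagonal (Sum.elim (fun i : Fin m => if (i:ℕ) < l then (0:ℝ) else 1)
    (fun i : Fin m => if (i:ℕ) < l then (0:ℝ) else 1))

end SBL

namespace SBL

theorem en_nonneg {ι : Type*} [Fintype ι] (x : ι → ℝ) : 0 ≤ en x := Real.sqrt_nonneg _

theorem abs_apply_le_en {ι : Type*} [Fintype ι] (x : ι → ℝ) (i : ι) : |x i| ≤ en x := by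
  rw [← Real.sqrt_sq_eq_abs]
  exact Real.sqrt_le_sqrt
    (Finset.single_le_sum (f := fun i => x i ^ 2) (fun _ _ => sq_nonneg _) (Finset.mem_univ i))

theorem en_le_sum_abs {ι : Type*} [Fintype ι] (x : ι → ℝ) : en x ≤ ∑ i, |x i| := by
  refine Real.sqrt_le_iff.2 ⟨Finset.sum_nonneg fun _ _ => abs_nonneg _, ?_⟩
  simpa only [sq_abs] using
    Finset.sum_sq_le_sq_sum_of_nonneg (s := Finset.univ) (f := fun i => |x i|)
      fun _ _ => abs_nonneg _

theorem en_eq_norm {ι : Type*} [Fintype ι] (x : ι → ℝ) : en x = ‖WithLp.toLp 2 x‖ := by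
  simp [en, EuclideanSpace.norm_eq]

theorem en_comp_le {ι κ : Type*} [Fintype ι] [Fintype κ] {f : ι → κ}
    (hf : Function.Injective f) (x : κ → ℝ) : en (fun i => x (f i)) ≤ en x := by
  refine Real.sqrt_le_sqrt ?_
  refine (Finset.sum_map Finset.univ ⟨f, hf⟩ fun k => x k ^ 2).symm.trans_le ?_
  exact Finset.sum_le_sum_of_subset_of_nonneg (Finset.subset_univ _) fun _ _ _ => sq_nonneg _

theorem abs_entry_le_opNorm {ι κ : Type*} [Fintype ι] [Fintype κ] [DecidableEq κ]
    (A : Matrix ι κ ℝ) (i : ι) (k : κ) : |A i k| ≤ opNorm A := by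
  have h := (LinearMap.toContinuousLinearMap (Matrix.toEuclideanLin A)).le_opNorm
    (EuclideanSpace.single k 1)
  rw [PiLp.norm_single, norm_one, mul_one] at h
  have hcol : LinearMap.toContinuousLinearMap (Matrix.toEuclideanLin A)
      (EuclideanSpace.single k 1) = WithLp.toLp 2 fun i => A i k := by
    ext i
    simp [Matrix.toLpLin_apply]
  rw [hcol, ← en_eq_norm] at h
  exact (abs_apply_le_en (fun i => A i k) i).trans h

theorem abs_mulVec_le {ι κ : Type*} [Fintype κ] {A : Matrix ι κ ℝ} {a b : ℝ}
    {x : κ → ℝ} (ha : 0 ≤ a) (hA : ∀ i k, |A i k| ≤ a) (hx : ∀ k, |x k| ≤ b) (i : ι) :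
    |A.mulVec x i| ≤ Fintype.card κ * (a * b) := by
  calc |A.mulVec x i| ≤ ∑ k, |A i k * x k| := Finset.abs_sum_le_sum_abs _ _
    _ ≤ ∑ _k : κ, a * b := Finset.sum_le_sum fun k _ => by
        rw [abs_mul]
        exact mul_le_mul (hA i k) (hx k) (abs_nonneg _) ha
    _ = _ := by simp

/-- Cramer's rule bounds the entries of the inverse of a `Δ`-regular matrix. -/
theorem IsReg.abs_inv_entry_le {m : ℕ} {Δ : ℝ} (hΔ : 1 ≤ Δ) {A : Matrix (Fin m) (Fin m) ℝ}
    (hA : IsReg Δ A) (i k : Fin m) : |A⁻¹ i k| ≤ Δ * (m.factorial * Δ ^ m) := by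
  rw [Matrix.inv_def, Matrix.smul_apply, Ring.inverse_eq_inv', smul_eq_mul, abs_mul, abs_inv,
    Matrix.adjugate_apply]
  refine mul_le_mul hA.2.2 ?_ (abs_nonneg _) (by linarith)
  have h := Matrix.det_le (A := A.updateRow k (Pi.single i 1)) (abv := AbsoluteValue.abs)
    (x := Δ) fun r c => by
      rw [Matrix.updateRow_apply, AbsoluteValue.abs_apply]
      split_ifs
      · rw [Pi.single_apply]
        split_ifs
        · simpa using hΔ
        · simpa using zero_le_one.trans hΔ
      · exact (abs_entry_le_opNorm A r c).trans hA.1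
  simpa using h

theorem sel_injective {m : ℕ} (j : Corner m) : Function.Injective (sel j) := by
  intro a b h
  unfold sel at h
  split_ifs at h <;> simpa using h

theorem projM_mul_apply {m : ℕ} {κ : Type*} (j : Corner m) (P : Matrix (Idx m) κ ℝ)
    (i : Fin m) (k : κ) : (projM j * P) i k = P (sel j i) k := by
  simp [projM, Matrix.mul_apply]

theorem projM_mul_mulVec_apply {m : ℕ} {κ : Type*} [Fintype κ] (j : Corner m)
    (P : Matrix (Idx m) κ ℝ) (x : κ → ℝ) (i : Fin m) :
    (projM j * P).mulVec x i = P.mulVec x (sel j i) := by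
  simp [Matrix.mulVec, dotProduct, projM_mul_apply]

theorem PiJ_inr_of_row_eq {m : ℕ} {J : Matrix (Idx m) (Fin m) ℝ} (hJ : IsUnit (Jb1 J).det)
    {h : Fin m} (hrow : ∀ k, J (Sum.inl h) k = J (Sum.inr h) k) (i : Fin m) :
    PiJ J h (Sum.inr i) = -(1 : Matrix (Fin m) (Fin m) ℝ) h i := by
  rw [← Matrix.mul_nonsing_inv (Jb1 J) hJ]
  simp [PiJ, Matrix.mul_apply, Jb0, Jb1, hrow]

theorem PiJ_sel_of_row_eq {m : ℕ} {J : Matrix (Idx m) (Fin m) ℝ} (hJ : IsUnit (Jb1 J).det)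
    {h : Fin m} (hrow : ∀ k, J (Sum.inl h) k = J (Sum.inr h) k) (j : Corner m) (i : Fin m) :
    PiJ J h (sel j i) = if i = h then (if j h = 0 then 1 else -1) else 0 := by
  by_cases hih : i = h
  · subst hih
    by_cases hj : j i = 0
    · simp [sel, hj, PiJ]
    · simp [sel, hj, PiJ_inr_of_row_eq hJ hrow]
  · by_cases hj : j i = 0
    · simp [sel, hj, PiJ, hih, Ne.symm hih]
    · simp [sel, hj, PiJ_inr_of_row_eq hJ hrow, hih, Ne.symm hih]

theorem Th_mulVec_apply {m : ℕ} (l : ℕ) (x : Fin m → ℝ) (i : Fin m) :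
    (Th l).mulVec x i = if (i : ℕ) < l then 0 else x i := by
  simp [Th, Matrix.mulVec_diagonal]

theorem ThB_mulVec_sel {m : ℕ} (l : ℕ) (j : Corner m) (x : Idx m → ℝ) (i : Fin m) :
    (ThB l).mulVec x (sel j i) = if (i : ℕ) < l then 0 else x (sel j i) := by
  rw [ThB, Matrix.mulVec_diagonal]
  unfold sel
  split_ifs <;> simp_all

/-- If the columns of `A` with index below `l` are `c h • e_h` with `c h ^ 2 = 1`, then for
`i ≥ l` the coordinate `x i` can be recovered from the coordinates of `A x` above `l`. -/
theorem inv_mulVec_Th_mulVec_apply {m l : ℕ} {A : Matrix (Fin m) (Fin m) ℝ} (hA : A.det ≠ 0)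
    {c : Fin m → ℝ} (hc : ∀ h, c h * c h = 1)
    (hcol : ∀ h : Fin m, (h : ℕ) < l → ∀ i, A i h = if i = h then c h else 0)
    (x : Fin m → ℝ) {i : Fin m} (hi : l ≤ (i : ℕ)) :
    A⁻¹.mulVec ((Th l).mulVec (A.mulVec x)) i = x i := by
  set s : Fin m → ℝ := fun h => if (h : ℕ) < l then c h * A.mulVec x h else 0 with hs
  have hAs : ∀ r, A.mulVec s r = if (r : ℕ) < l then A.mulVec x r else 0 := by
    intro r
    have hterm : ∀ h, A r h * s h =
        if r = h then (if (h : ℕ) < l then A.mulVec x h else 0) else 0 := by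
      intro h
      by_cases hh : (h : ℕ) < l
      · by_cases hr : r = h
        · simp [hs, hh, hcol h hh, hr, ← mul_assoc, hc]
        · simp [hcol h hh, hr]
      · simp [hs, hh]
    rw [Matrix.mulVec, dotProduct, Finset.sum_congr rfl fun h _ => hterm h]
    simp
  have key : (Th l).mulVec (A.mulVec x) = A.mulVec (x - s) := by
    ext r
    rw [Matrix.mulVec_sub, Pi.sub_apply, hAs, Th_mulVec_apply]
    split_ifs <;> simp
  rw [key, Matrix.mulVec_mulVec, Matrix.nonsing_inv_mul A (isUnit_iff_ne_zero.2 hA),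
    Matrix.one_mulVec]
  simp [hs, not_lt.2 hi]

/-- Lemma 5.2 (norm comparison along `Θ̃`). -/
theorem statement13 (m l : ℕ) (hm : 2 ≤ m) (hl0 : 0 < l) (hlm : l ≤ m)
    (Δ : ℝ) (hΔ : 1 < Δ) :
    ∃ C : ℝ, 0 < C ∧ ∀ J : Matrix (Idx m) (Fin m) ℝ,
      IsUnit (Jb0 J).det → IsUnit (Jb1 J).det →
      (∀ h : Fin m, (h:ℕ) < l → ∀ k, J (Sum.inl h) k = J (Sum.inr h) k) →
      (∀ j : Corner m, IsReg Δ (projM j * (PiJ J).transpose)) →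
      ∀ j : Corner m, ∀ ξ : Fin m → ℝ,
        en ((PiJ J).transpose.mulVec ((Th l).mulVec ξ)) ≤
          C * en ((Th l).mulVec ((projM j * (PiJ J).transpose).mulVec ((Th l).mulVec ξ))) ∧
        C * en ((Th l).mulVec ((projM j * (PiJ J).transpose).mulVec ((Th l).mulVec ξ))) ≤
          C * en ((ThB l).mulVec ((PiJ J).transpose.mulVec ((Th l).mulVec ξ))) := by
  have hΔ0 : 0 < Δ := by linarith
  have hm0 : (0 : ℝ) < m := by exact_mod_cast (by omega : 0 < m)
  set K : ℝ := Δ * (m.factorial * Δ ^ m)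
  have hK0 : 0 < K := by positivity
  have hC0 : 0 < (m + m) * (m * (Δ * (m * K))) := by positivity
  refine ⟨_, hC0, ?_⟩
  intro J _ hJ1 hrow hreg j ξ
  set x := (Th l).mulVec ξ with hx
  set A := projM j * (PiJ J).transpose with hA
  set E := en ((Th l).mulVec (A.mulVec x))
  constructor
  · have hxE : ∀ i, |x i| ≤ m * (K * E) := by
      intro i
      by_cases hi : (i : ℕ) < l
      · have h0 : x i = 0 := by rw [hx, Th_mulVec_apply, if_pos hi]
        have hE0 : 0 ≤ E := en_nonneg _
        rw [h0, abs_zero]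
        positivity
      · rw [← inv_mulVec_Th_mulVec_apply (A := A) (hreg j).2.1
          (c := fun h => if j h = 0 then 1 else -1)
          (fun h => by split_ifs <;> norm_num)
          (fun h hh r => by
            rw [hA, projM_mul_apply, Matrix.transpose_apply, PiJ_sel_of_row_eq hJ1 (hrow h hh)])
          x (not_lt.1 hi)]
        simpa only [Fintype.card_fin] using abs_mulVec_le hK0.le ((hreg j).abs_inv_entry_le hΔ.le)
          (abs_apply_le_en ((Th l).mulVec (A.mulVec x))) i
    have hP : ∀ k i, |(PiJ J).transpose k i| ≤ Δ := by
      have hsel : ∀ k : Idx m, ∃ (j' : Corner m) (r : Fin m), sel j' r = k := by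
        rintro (r | r)
        · exact ⟨fun _ => 0, r, by simp [sel]⟩
        · exact ⟨fun _ => 1, r, by simp [sel]⟩
      intro k i
      obtain ⟨j', r, rfl⟩ := hsel k
      have h := projM_mul_apply j' (PiJ J).transpose r i
      exact h ▸ (abs_entry_le_opNorm _ _ _).trans (hreg j').1
    calc en ((PiJ J).transpose.mulVec x)
        ≤ ∑ k, |(PiJ J).transpose.mulVec x k| := en_le_sum_abs _
      _ ≤ ∑ _k : Idx m, (m : ℝ) * (Δ * (m * (K * E))) := Finset.sum_le_sum fun k _ => by
          simpa using abs_mulVec_le hΔ0.le hP hxE k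
      _ = _ := by simp; ring
  · refine mul_le_mul_of_nonneg_left ?_ hC0.le
    refine le_of_eq_of_le (congrArg en (funext fun i => ?_))
      (en_comp_le (sel_injective j) ((ThB l).mulVec ((PiJ J).transpose.mulVec x)))
    rw [ThB_mulVec_sel, Th_mulVec_apply, projM_mul_mulVec_apply]

end SBL
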